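/- arXiv:2511.09189 — 3 statements merged into one kernel-verified Lean document; each statement's English description precedes it below -/
import Mathlib

section
/- Let X be a locally compact Hausdorff topological space. Then every closed left ideal of the C*-algebra C₀(X) is a two-sided ideal, and the map sending an open subset U ⊆ X to the closed ideal I_U := {f ∈ C₀(X) | f(x) = 0 for all x ∈ X \ U} is an inclusion-preserving bijection from the set of open subsets of X onto the set of closed ideals of C₀(X); moreover I_{U ∩ V} = I_U ∩ I_V for all open U, V ⊆ X. -/
open scoped ZeroAtInfty

/-!
A closed ideal `L` of `C₀(X)` is recovered from the set `W` of points at which some member of `L`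
is nonzero. Let `f` vanish off `W`, let `0 < ε`, and let `K` be the compact set where `ε ≤ ‖f‖`,
so that `K ⊆ W`. Finitely many squares `star g * g` with `g ∈ L` have a sum `h ∈ L`, `0 ≤ h`, which
after scaling is as large as we like on `K`. Then `q = f / (1 + h)` is uniformly small, and
`f - q * h = q`, so `f` is a limit of the elements `q * h` of `L`. Conversely an open set `U` is
recovered from the functions vanishing off `U` by Urysohn's lemma.
-/

open Filter Topology

section Galois

variable {X E : Type*} [TopologicalSpace X]

/-- The functions in `C₀(X, E)` vanishing on the complement of `U`, i.e. the ideal `I_U`, as a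
submodule over a ring of scalars `R`. -/
def vanishingOff (R E : Type*) [Semiring R] [TopologicalSpace E] [AddCommMonoid E]
    [ContinuousAdd E] [Module R E] [ContinuousConstSMul R E] (U : Set X) :
    Submodule R C₀(X, E) where
  carrier := {f | ∀ x ∈ Uᶜ, f x = 0}
  add_mem' hf hg x hx := by simp [hf x hx, hg x hx]
  zero_mem' _ _ := rfl
  smul_mem' c f hf x hx := by simp [hf x hx]

/-- The set of points at which some member of `S` does not vanish. For a closed ideal `S` it is the
open set corresponding to `S`. -/
def cozeroSet [TopologicalSpace E] [Zero E] (S : Set C₀(X, E)) : Set X :=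
  {x | ∃ f ∈ S, f x ≠ 0}

theorem isOpen_cozeroSet [TopologicalSpace E] [T1Space E] [Zero E] (S : Set C₀(X, E)) :
    IsOpen (cozeroSet S) := by
  have h : cozeroSet S = ⋃ f ∈ S, f ⁻¹' {0}ᶜ := by ext; simp [cozeroSet]
  rw [h]
  exact isOpen_biUnion fun f _ ↦ isOpen_compl_singleton.preimage (map_continuous f)

theorem gc_cozeroSet_vanishingOff (R : Type*) [Semiring R] [TopologicalSpace E] [AddCommMonoid E]
    [ContinuousAdd E] [Module R E] [ContinuousConstSMul R E] :
    GaloisConnection (cozeroSet (X := X) (E := E))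
      fun U ↦ (vanishingOff R E U : Set C₀(X, E)) := by
  refine fun S U ↦ ⟨fun h f hf x hx ↦ ?_, ?_⟩
  · by_contra hfx
    exact hx (h ⟨f, hf, hfx⟩)
  · rintro h x ⟨f, hf, hfx⟩
    by_contra hx
    exact hfx (h hf x hx)

theorem isClosed_vanishingOff (R : Type*) [Semiring R] [NormedAddCommGroup E] [Module R E]
    [ContinuousConstSMul R E] (U : Set X) : IsClosed (vanishingOff R E U : Set C₀(X, E)) := by
  have continuous_apply (x : X) : Continuous fun f : C₀(X, E) ↦ f x :=
    (continuous_eval_const (F := BoundedContinuousFunction X E) x).comp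
      ZeroAtInftyContinuousMap.isometry_toBCF.continuous
  have h : (vanishingOff R E U : Set C₀(X, E)) = ⋂ x ∈ Uᶜ, {f | f x = 0} := by
    ext f
    simp only [Set.mem_iInter]
    rfl
  rw [h]
  exact isClosed_biInter fun x _ ↦ isClosed_eq (continuous_apply x) continuous_const

section Mul

variable {R : Type*} [Semiring R] [TopologicalSpace E] [NonUnitalNonAssocSemiring E]
  [IsTopologicalSemiring E] [Module R E] [ContinuousConstSMul R E] {U : Set X} {a : C₀(X, E)}

theorem mul_mem_vanishingOff_left (b : C₀(X, E)) (ha : a ∈ vanishingOff R E U) :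
    b * a ∈ vanishingOff R E U := fun x hx ↦ by
  simp [ha x hx]

theorem mul_mem_vanishingOff_right (ha : a ∈ vanishingOff R E U) (b : C₀(X, E)) :
    a * b ∈ vanishingOff R E U := fun x hx ↦ by
  simp [ha x hx]

end Mul

end Galois

theorem isCompact_setOf_le_norm_zeroAtInfty {X E : Type*} [TopologicalSpace X]
    [SeminormedAddCommGroup E] (f : C₀(X, E)) {ε : ℝ} (hε : 0 < ε) :
    IsCompact {x | ε ≤ ‖f x‖} := by
  have eventually_lt : ∀ᶠ x in cocompact X, ‖f x‖ < ε :=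
    (zero_at_infty f).norm.eventually_lt_const (by simpa)
  obtain ⟨K, hK, hKf⟩ := mem_cocompact.1 eventually_lt
  refine hK.of_isClosed_subset (isClosed_le continuous_const (map_continuous f).norm) fun x hx ↦ ?_
  by_contra hxK
  have lt : ‖f x‖ < ε := hKf hxK
  exact lt.not_ge hx

section RCLike

open scoped ComplexOrder

variable {𝕜 X : Type*} [RCLike 𝕜] [TopologicalSpace X]

theorem exists_zeroAtInfty_apply_eq_one [WeaklyLocallyCompactSpace X] [R1Space X] {U : Set X}
    (hU : IsOpen U) {x : X} (hx : x ∈ U) : ∃ f ∈ vanishingOff 𝕜 𝕜 U, f x = 1 := by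
  obtain ⟨f, hfx, hfU, hf, -⟩ := exists_continuous_one_zero_of_isCompact
    (isCompact_singleton (x := x)) hU.isClosed_compl (by simpa using hx)
  have hc : HasCompactSupport fun y ↦ (f y : 𝕜) := hf.comp_left RCLike.ofReal_zero
  refine ⟨⟨⟨fun y ↦ (f y : 𝕜), by fun_prop⟩, hc.is_zero_at_infty⟩, fun y hy ↦ ?_, ?_⟩
  · simp [hfU hy]
  · simp [hfx rfl]

theorem cozeroSet_vanishingOff [WeaklyLocallyCompactSpace X] [R1Space X] {U : Set X}
    (hU : IsOpen U) : cozeroSet (vanishingOff 𝕜 𝕜 U : Set C₀(X, 𝕜)) = U := by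
  refine ((gc_cozeroSet_vanishingOff 𝕜).l_u_le U).antisymm fun x hx ↦ ?_
  obtain ⟨f, hf, hfx⟩ := exists_zeroAtInfty_apply_eq_one (𝕜 := 𝕜) hU hx
  exact ⟨f, hf, hfx ▸ one_ne_zero⟩

theorem one_add_re_le_norm_one_add (z : 𝕜) : 1 + RCLike.re z ≤ ‖1 + z‖ := by
  simpa using RCLike.re_le_norm (1 + z)

theorem exists_zeroAtInfty_mul_one_add_eq (f : C₀(X, 𝕜)) {h : X → 𝕜} (hc : Continuous h)
    (h0 : ∀ x, 0 ≤ RCLike.re (h x)) : ∃ q : C₀(X, 𝕜), ∀ x, q x * (1 + h x) = f x := by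
  have one_le_norm (x : X) : 1 ≤ ‖1 + h x‖ := by
    linarith [one_add_re_le_norm_one_add (h x), h0 x]
  have ne_zero (x : X) : 1 + h x ≠ 0 := norm_pos_iff.1 (one_pos.trans_le (one_le_norm x))
  have norm_le (x : X) : ‖f x / (1 + h x)‖ ≤ ‖f x‖ := by
    rw [norm_div]
    exact div_le_self (norm_nonneg _) (one_le_norm x)
  refine ⟨⟨⟨fun x ↦ f x / (1 + h x), (map_continuous f).div₀ (by fun_prop) ne_zero⟩, ?_⟩,
    fun x ↦ div_mul_cancel₀ _ (ne_zero x)⟩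
  exact squeeze_zero_norm norm_le (by simpa using (zero_at_infty f).norm)

theorem norm_le_of_forall_mul_one_add_eq {f q : C₀(X, 𝕜)} {h : X → 𝕜} {ε : ℝ} (hε : 0 < ε)
    (hq : ∀ x, q x * (1 + h x) = f x) (h0 : ∀ x, 0 ≤ RCLike.re (h x))
    (hM : ∀ x, ε ≤ ‖f x‖ → ‖f‖ / ε ≤ RCLike.re (h x)) : ‖q‖ ≤ ε := by
  have mul_le (x : X) : ‖q x‖ * (1 + RCLike.re (h x)) ≤ ‖f x‖ := by
    rw [← hq x, norm_mul]
    gcongr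
    exact one_add_re_le_norm_one_add (h x)
  rw [← ZeroAtInftyContinuousMap.norm_toBCF_eq_norm,
    BoundedContinuousFunction.norm_le hε.le]
  intro x
  change ‖q x‖ ≤ ε
  rcases le_or_gt ε ‖f x‖ with hx | hx
  · refine le_of_mul_le_mul_right ?_ (by linarith [h0 x] : 0 < 1 + RCLike.re (h x))
    calc ‖q x‖ * (1 + RCLike.re (h x)) ≤ ‖f x‖ := mul_le x
      _ ≤ ‖f‖ := f.toBCF.norm_coe_le_norm x
      _ = ε * (‖f‖ / ε) := (mul_div_cancel₀ _ hε.ne').symm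
      _ ≤ ε * (1 + RCLike.re (h x)) := by gcongr; linarith [hM x hx]
  · calc ‖q x‖ ≤ ‖q x‖ * (1 + RCLike.re (h x)) :=
          le_mul_of_one_le_right (norm_nonneg _) (by linarith [h0 x])
      _ ≤ ‖f x‖ := mul_le x
      _ ≤ ε := hx.le

variable {L : AddSubmonoid C₀(X, 𝕜)}

theorem exists_mem_nonneg_eventually_le (hL : ∀ a ∈ L, ∀ b : C₀(X, 𝕜), b * a ∈ L) {x : X}
    (hx : x ∈ cozeroSet (L : Set C₀(X, 𝕜))) (M : ℝ) :
    ∃ h ∈ L, (∀ y, 0 ≤ h y) ∧ ∀ᶠ y in 𝓝 x, (M : 𝕜) ≤ h y := by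
  obtain ⟨g, hgL, hgx⟩ := hx
  obtain ⟨n, hn⟩ := exists_lt_nsmul (pow_pos (norm_pos_iff.2 hgx) 2) M
  have apply_eq (y : X) : (n • (star g * g)) y = ((n • ‖g y‖ ^ 2 : ℝ) : 𝕜) := by
    simp [RCLike.conj_mul]
  refine ⟨n • (star g * g), L.nsmul_mem (hL g hgL _) n, fun y ↦ ?_, ?_⟩
  · rw [apply_eq, RCLike.ofReal_nonneg]
    positivity
  · have hc : Continuous fun y ↦ n • ‖g y‖ ^ 2 := ((map_continuous g).norm.pow 2).const_smul n
    filter_upwards [hc.continuousAt.eventually (lt_mem_nhds hn)] with y hy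
    rw [apply_eq, RCLike.ofReal_le_ofReal]
    exact hy.le

theorem exists_mem_nonneg_forall_le (hL : ∀ a ∈ L, ∀ b : C₀(X, 𝕜), b * a ∈ L) {K : Set X}
    (hK : IsCompact K) (hKL : K ⊆ cozeroSet (L : Set C₀(X, 𝕜))) (M : ℝ) :
    ∃ h ∈ L, (∀ x, 0 ≤ h x) ∧ ∀ x ∈ K, (M : 𝕜) ≤ h x := by
  refine hK.induction_on (p := fun s ↦ ∃ h ∈ L, (∀ x, 0 ≤ h x) ∧ ∀ x ∈ s, (M : 𝕜) ≤ h x)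
    ⟨0, L.zero_mem, by simp, by simp⟩ ?mono ?union fun x hx ↦ ?nhds
  case mono =>
    rintro s t hst ⟨h, hhL, h0, hM⟩
    exact ⟨h, hhL, h0, fun x hx ↦ hM x (hst hx)⟩
  case union =>
    rintro s t ⟨h, hhL, h0, hM⟩ ⟨k, hkL, k0, kM⟩
    refine ⟨h + k, L.add_mem hhL hkL, fun x ↦ add_nonneg (h0 x) (k0 x), ?_⟩
    rintro x (hx | hx)
    · exact le_add_of_le_of_nonneg (hM x hx) (k0 x)
    · exact le_add_of_nonneg_of_le (h0 x) (kM x hx)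
  case nhds =>
    obtain ⟨h, hhL, h0, hM⟩ := exists_mem_nonneg_eventually_le hL (hKL hx) M
    exact ⟨{y | (M : 𝕜) ≤ h y}, mem_nhdsWithin_of_mem_nhds hM, h, hhL, h0, fun _ hy ↦ hy⟩

theorem exists_mem_norm_sub_le (hL : ∀ a ∈ L, ∀ b : C₀(X, 𝕜), b * a ∈ L) {f : C₀(X, 𝕜)}
    (hf : f ∈ vanishingOff 𝕜 𝕜 (cozeroSet (L : Set C₀(X, 𝕜)))) {ε : ℝ} (hε : 0 < ε) :
    ∃ a ∈ L, ‖f - a‖ ≤ ε := by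
  have subset_cozeroSet : {x | ε ≤ ‖f x‖} ⊆ cozeroSet (L : Set C₀(X, 𝕜)) := fun x hx ↦ by
    by_contra hxL
    exact (hε.trans_le hx).ne' (by rw [hf x hxL, norm_zero])
  obtain ⟨h, hhL, h0, hM⟩ := exists_mem_nonneg_forall_le hL
    (isCompact_setOf_le_norm_zeroAtInfty f hε) subset_cozeroSet (‖f‖ / ε)
  have re_nonneg (x : X) : 0 ≤ RCLike.re (h x) := (RCLike.nonneg_iff.1 (h0 x)).1
  obtain ⟨q, hq⟩ := exists_zeroAtInfty_mul_one_add_eq f (map_continuous h) re_nonneg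
  have sub_eq : f - q * h = q := by
    ext x
    simp only [ZeroAtInftyContinuousMap.sub_apply, ZeroAtInftyContinuousMap.mul_apply, ← hq x]
    ring
  refine ⟨q * h, hL h hhL q, ?_⟩
  rw [sub_eq]
  refine norm_le_of_forall_mul_one_add_eq hε hq re_nonneg fun x hx ↦ ?_
  simpa only [RCLike.ofReal_re] using (RCLike.le_iff_re_im.1 (hM x hx)).1

theorem closure_eq_vanishingOff_cozeroSet (hL : ∀ a ∈ L, ∀ b : C₀(X, 𝕜), b * a ∈ L) :
    closure (L : Set C₀(X, 𝕜)) = vanishingOff 𝕜 𝕜 (cozeroSet (L : Set C₀(X, 𝕜))) := by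
  refine (closure_minimal ((gc_cozeroSet_vanishingOff 𝕜).le_u_l _)
    (isClosed_vanishingOff 𝕜 _)).antisymm fun f hf ↦ ?_
  refine (mem_closure_iff_nhds_basis Metric.nhds_basis_closedBall).2 fun ε hε ↦ ?_
  obtain ⟨a, haL, ha⟩ := exists_mem_norm_sub_le hL hf hε
  exact ⟨a, haL, mem_closedBall_iff_norm'.2 ha⟩

end RCLike

theorem stmt0_general (𝕜 X : Type*) [RCLike 𝕜] [TopologicalSpace X] [WeaklyLocallyCompactSpace X]
    [R1Space X] :
    (∀ L : AddSubmonoid C₀(X, 𝕜), (∀ a ∈ L, ∀ b : C₀(X, 𝕜), b * a ∈ L) →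
      ∀ a ∈ L, ∀ b : C₀(X, 𝕜), a * b ∈ L) ∧
    (∀ U : Set X, IsClosed (vanishingOff 𝕜 𝕜 U : Set C₀(X, 𝕜)) ∧
      ∀ a ∈ vanishingOff 𝕜 𝕜 U, ∀ b : C₀(X, 𝕜),
        b * a ∈ vanishingOff 𝕜 𝕜 U ∧ a * b ∈ vanishingOff 𝕜 𝕜 U) ∧
    (∀ U V : Set X, IsOpen U → (U ⊆ V ↔ vanishingOff 𝕜 𝕜 U ≤ vanishingOff 𝕜 𝕜 V)) ∧
    (∀ L : AddSubmonoid C₀(X, 𝕜), IsClosed (L : Set C₀(X, 𝕜)) →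
      (∀ a ∈ L, ∀ b : C₀(X, 𝕜), b * a ∈ L) →
      ∃ U : Set X, IsOpen U ∧ (L : Set C₀(X, 𝕜)) = vanishingOff 𝕜 𝕜 U) ∧
    (∀ U V : Set X, vanishingOff 𝕜 𝕜 (U ∩ V) = vanishingOff 𝕜 𝕜 U ⊓ vanishingOff 𝕜 𝕜 V) := by
  have gc := gc_cozeroSet_vanishingOff (X := X) (E := 𝕜) 𝕜
  refine ⟨fun L hL a ha b ↦ mul_comm b a ▸ hL a ha b,
    fun U ↦ ⟨isClosed_vanishingOff 𝕜 U, fun a ha b ↦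
      ⟨mul_mem_vanishingOff_left b ha, mul_mem_vanishingOff_right ha b⟩⟩,
    fun U V hU ↦ ?_, fun L hLc hL ↦ ⟨_, isOpen_cozeroSet (L : Set C₀(X, 𝕜)), ?_⟩,
    fun U V ↦ SetLike.coe_injective gc.u_inf⟩
  · have := gc (vanishingOff 𝕜 𝕜 U) V
    rwa [cozeroSet_vanishingOff hU] at this
  · rw [← closure_eq_vanishingOff_cozeroSet hL, hLc.closure_eq]

/-- For a locally compact Hausdorff space `X`, every closed left ideal of
`C₀(X)` is a two-sided ideal, and `U ↦ I_U := {f | f = 0 on X \ U}` is an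
inclusion-preserving bijection from open subsets of `X` onto closed ideals of `C₀(X)`,
with `I_{U ∩ V} = I_U ∩ I_V`. -/
theorem stmt0 (X : Type*) [TopologicalSpace X] [LocallyCompactSpace X] [T2Space X]
    (I : Set X → Set C₀(X, ℂ))
    (hI : ∀ U : Set X, I U = {f : C₀(X, ℂ) | ∀ x ∈ Uᶜ, f x = 0}) :
    -- every closed left ideal is a two-sided ideal
    (∀ L : Submodule ℂ C₀(X, ℂ), IsClosed (L : Set C₀(X, ℂ)) →
      (∀ a ∈ L, ∀ b : C₀(X, ℂ), b * a ∈ L) → (∀ a ∈ L, ∀ b : C₀(X, ℂ), a * b ∈ L)) ∧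
    -- each `I U` is a closed (two-sided) ideal
    (∀ U : Set X, IsOpen U → ∃ L : Submodule ℂ C₀(X, ℂ),
      (L : Set C₀(X, ℂ)) = I U ∧ IsClosed (L : Set C₀(X, ℂ)) ∧
      (∀ a ∈ L, ∀ b : C₀(X, ℂ), b * a ∈ L ∧ a * b ∈ L)) ∧
    -- inclusion preserving (hence injective)
    (∀ U V : Set X, IsOpen U → IsOpen V → (U ⊆ V ↔ I U ⊆ I V)) ∧
    -- surjective onto the set of closed ideals
    (∀ L : Submodule ℂ C₀(X, ℂ), IsClosed (L : Set C₀(X, ℂ)) →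
      (∀ a ∈ L, ∀ b : C₀(X, ℂ), b * a ∈ L) →
      ∃ U : Set X, IsOpen U ∧ (L : Set C₀(X, ℂ)) = I U) ∧
    -- meets are preserved
    (∀ U V : Set X, IsOpen U → IsOpen V → I (U ∩ V) = I U ∩ I V) := by
  obtain rfl : I = fun U ↦ (vanishingOff ℂ ℂ U : Set C₀(X, ℂ)) := funext hI
  obtain ⟨two_sided, ideal, subset_iff, exists_eq, inter⟩ := stmt0_general ℂ X
  exact ⟨fun L _ ↦ two_sided L.toAddSubmonoid, fun U _ ↦ ⟨_, rfl, ideal U⟩,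
    fun U V hU _ ↦ subset_iff U V hU, fun L ↦ exists_eq L.toAddSubmonoid,
    fun U V _ _ ↦ congrArg SetLike.coe (inter U V)⟩
end

section
/- Let A be a C*-algebra and let K(A) be the linear span of K(A)₊. Then K(A) is a dense two-sided ideal of A which is hereditary (if 0 ≤ x ≤ y with y ∈ K(A) then x ∈ K(A)) and which is minimal among dense two-sided ideals: for every dense two-sided ideal I of A one has K(A) ⊆ I. -/
/-!
Star-homomorphisms commute with functional calculus, so `K(A)₊` is a hereditary cone invariant under
conjugation by the unitaries of the unitization `A⁺¹`. These span `A⁺¹`, and the parallelogram law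
`(c + d)⋆ x (c + d) ≤ 2 (c⋆ x c + d⋆ x d)` extends the invariance to `c⋆ K(A)₊ c ⊆ K(A)₊` for all
`c`; by polarization `K(A)` is an ideal. It is hereditary because real parts of elements of the span
are dominated by elements of the cone.

For minimality, let `0 ≤ x ≤ ∑ xₖ` with `xₖ ∈ K(A)₀`, and write `xₖ ≤ wₖ wₖ⋆` with `wₖ = wₖ eₖ`,
where `wₖ` and `eₖ` are functions of one positive element. Pedersen's form of the Riesz
decomposition gives `x = ∑ uₖ uₖ⋆` with `uₖ⋆ uₖ ≤ wₖ⋆ wₖ`, hence `uₖ = uₖ eₖ`. A dense ideal `I`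
contains some `y` with `‖eₖ - y‖ < 1`; then `uₖ y = uₖ (1 - (eₖ - y))`, so
`uₖ = uₖ y (1 - (eₖ - y))⁻¹ ∈ I`.
-/

open Filter Topology Unitization
open scoped CStarAlgebra ComplexStarModule

section NormEstimates

variable {A : Type*} [NonUnitalCStarAlgebra A] [PartialOrder A] [StarOrderedRing A] {p q x y : A}

lemma norm_le_norm_of_star_mul_self_le (h : star p * p ≤ star q * q) : ‖p‖ ≤ ‖q‖ := by
  have := CStarAlgebra.norm_le_norm_of_nonneg_of_le (star_mul_self_nonneg p) h
  rw [CStarRing.norm_star_mul_self, CStarRing.norm_star_mul_self] at this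
  exact le_of_sq_le_sq (by simpa only [sq] using this) (norm_nonneg q)

lemma norm_mul_le_norm_mul_of_star_mul_self_le (h : star p * p ≤ star q * q) (w : A) :
    ‖p * w‖ ≤ ‖q * w‖ :=
  norm_le_norm_of_star_mul_self_le <| by
    simpa only [star_mul, mul_assoc] using star_left_conjugate_le_conjugate h w

lemma norm_sub_mul_le_norm_sub_mul_of_star_mul_self_le (h : star p * p ≤ star q * q) (w : A) :
    ‖p - p * w‖ ≤ ‖q - q * w‖ := by
  have h_inr : star (p : A⁺¹) * p ≤ star (q : A⁺¹) * q := by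
    simpa only [inr_star, inr_mul] using
      (inr_le_iff _ _ (.star_mul_self p) (.star_mul_self q)).mpr h
  simpa only [mul_sub, mul_one, ← inr_mul, ← inr_sub, norm_inr] using
    norm_mul_le_norm_mul_of_star_mul_self_le h_inr (1 - w)

lemma norm_mul_mul_le_norm_mul_mul_of_star_mul_self_le (hx : star x * x ≤ star p * p)
    (hy : y * star y ≤ q * star q) (b : A) : ‖x * b * y‖ ≤ ‖p * b * q‖ := calc
  ‖x * b * y‖ ≤ ‖p * (b * y)‖ := by
    simpa only [mul_assoc] using norm_mul_le_norm_mul_of_star_mul_self_le hx (b * y)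
  _ = ‖star y * star (p * b)‖ := by rw [← star_mul, norm_star, mul_assoc]
  _ ≤ ‖star q * star (p * b)‖ :=
    norm_mul_le_norm_mul_of_star_mul_self_le (by simpa only [star_star] using hy) _
  _ = ‖p * b * q‖ := by rw [← star_mul, norm_star]

lemma cauchySeq_mul_mul_of_star_mul_self_le (hx : star x * x ≤ star p * p)
    (hy : y * star y ≤ q * star q) {g : ℕ → A} (hg : CauchySeq fun n ↦ p * g n * q) :
    CauchySeq fun n ↦ x * g n * y := by
  rw [Metric.cauchySeq_iff] at hg ⊢
  refine fun ε hε ↦ (hg ε hε).imp fun N hN m hm n hn ↦ lt_of_le_of_lt ?_ (hN m hm n hn)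
  simpa only [dist_eq_norm, mul_sub, sub_mul] using
    norm_mul_mul_le_norm_mul_mul_of_star_mul_self_le hx hy (g m - g n)

end NormEstimates

section RieszDecomposition

variable {A : Type*} [NonUnitalCStarAlgebra A] [PartialOrder A] [StarOrderedRing A]

lemma norm_sqrt_sub_cfcₙ_sqrt_mul_le {s : A} (hs : 0 ≤ s) {ε : ℝ} {r : ℝ → ℝ} (hr : Continuous r)
    (hr_mem : ∀ t, 0 ≤ t → r t ∈ Set.Icc 0 1) (hr_one : ∀ t, ε ≤ t → r t = 1) :
    ‖CFC.sqrt s - cfcₙ (fun t ↦ √t * r t) s‖ ≤ √ε := by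
  rw [CFC.sqrt_eq_real_sqrt s, ← cfcₙ_sub Real.sqrt (fun t ↦ √t * r t) s]
  refine norm_cfcₙ_le fun t ht ↦ ?_
  obtain ⟨h0, h1⟩ := hr_mem t (quasispectrum_nonneg_of_nonneg s hs t ht)
  rw [← mul_one_sub, norm_mul, Real.norm_of_nonneg (Real.sqrt_nonneg t),
    Real.norm_of_nonneg (sub_nonneg.mpr h1)]
  rcases le_total ε t with hεt | htε
  · simp [hr_one t hεt]
  · exact (mul_le_of_le_one_right (Real.sqrt_nonneg t) (sub_le_self 1 h0)).trans
      (Real.sqrt_le_sqrt htε)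

lemma exists_isSelfAdjoint_norm_sqrt_sub_le {s : A} (hs : 0 ≤ s) {ε : ℝ} (hε : 0 < ε) :
    ∃ g : A, IsSelfAdjoint g ∧ ‖g * s * g‖ ≤ 1 ∧
      ‖CFC.sqrt s - CFC.sqrt s * g * CFC.sqrt s‖ ≤ √ε ∧
      ‖CFC.sqrt s - CFC.sqrt s * (g * s * g)‖ ≤ √ε := by
  let r : ℝ → ℝ := fun t ↦ t / max t ε
  -- `g = f(s)` replaces `s ^ (-1/2)`, which need not exist in `A`.
  let f : ℝ → ℝ := fun t ↦ √t / max t ε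
  have max_ne (t : ℝ) : max t ε ≠ 0 := (lt_max_of_lt_right hε).ne'
  have hr : Continuous r := by fun_prop (disch := exact max_ne _)
  have hf : Continuous f := by fun_prop (disch := exact max_ne _)
  have : f 0 = 0 := by simp [f]
  have r_mem (t : ℝ) (ht : 0 ≤ t) : r t ∈ Set.Icc 0 1 :=
    ⟨by positivity, div_le_one_of_le₀ (le_max_left t ε) (by positivity)⟩
  have r_one (t : ℝ) (ht : ε ≤ t) : r t = 1 := by
    simp only [r, max_eq_left ht, div_self (hε.trans_le ht).ne']
  have r_sq_mem (t : ℝ) (ht : 0 ≤ t) : r t ^ 2 ∈ Set.Icc 0 1 :=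
    ⟨sq_nonneg _, pow_le_one₀ (r_mem t ht).1 (r_mem t ht).2⟩
  have nonneg_of_mem : ∀ t ∈ quasispectrum ℝ s, 0 ≤ t := quasispectrum_nonneg_of_nonneg s hs
  have hfsf : cfcₙ f s * s * cfcₙ f s = cfcₙ (fun t ↦ r t ^ 2) s := by
    nth_rw 2 [← cfcₙ_id' ℝ s]
    rw [← cfcₙ_mul f (fun t ↦ t) s, ← cfcₙ_mul (fun t ↦ f t * t) f s]
    refine cfcₙ_congr fun t ht ↦ ?_
    simp only [f, r]
    field_simp
    rw [Real.sq_sqrt (nonneg_of_mem t ht), sq]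
  refine ⟨cfcₙ f s, IsSelfAdjoint.cfcₙ, ?_, ?_, ?_⟩
  · rw [hfsf]
    refine norm_cfcₙ_le fun t ht ↦ ?_
    have := r_sq_mem t (nonneg_of_mem t ht)
    rw [Real.norm_of_nonneg this.1]
    exact this.2
  · convert norm_sqrt_sub_cfcₙ_sqrt_mul_le hs hr r_mem r_one using 3
    rw [CFC.sqrt_eq_real_sqrt s, ← cfcₙ_mul Real.sqrt f s,
      ← cfcₙ_mul (fun t ↦ √t * f t) Real.sqrt s]
    refine cfcₙ_congr fun t ht ↦ ?_
    simp only [f, r]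
    field_simp
    rw [pow_succ', Real.sq_sqrt (nonneg_of_mem t ht)]
  · convert norm_sqrt_sub_cfcₙ_sqrt_mul_le hs (hr.pow 2) r_sq_mem
      (fun t ht ↦ by simp [r_one t ht]) using 3
    rw [hfsf, CFC.sqrt_eq_real_sqrt s, ← cfcₙ_mul Real.sqrt (fun t ↦ r t ^ 2) s
      Real.continuous_sqrt.continuousOn Real.sqrt_zero (hr.pow 2).continuousOn (by simp [r])]
    rfl

lemma exists_seq_tendsto_sqrt {s : A} (hs : 0 ≤ s) :
    ∃ g : ℕ → A, (∀ n, IsSelfAdjoint (g n)) ∧ (∀ n, ‖g n * s * g n‖ ≤ 1) ∧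
      Tendsto (fun n ↦ CFC.sqrt s * g n * CFC.sqrt s) atTop (𝓝 (CFC.sqrt s)) ∧
      Tendsto (fun n ↦ CFC.sqrt s * (g n * s * g n)) atTop (𝓝 (CFC.sqrt s)) := by
  choose g hg_sa hg_norm hg hgsg using fun n : ℕ ↦
    exists_isSelfAdjoint_norm_sqrt_sub_le hs (ε := 1 / ((n : ℝ) + 1)) Nat.one_div_pos_of_nat
  have sqrt_lim : Tendsto (fun n : ℕ ↦ √(1 / ((n : ℝ) + 1))) atTop (𝓝 0) := by
    simpa using (tendsto_one_div_add_atTop_nhds_zero_nat (𝕜 := ℝ)).sqrt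
  refine ⟨g, hg_sa, hg_norm, ?_, ?_⟩ <;>
    refine tendsto_iff_norm_sub_tendsto_zero.mpr
      (squeeze_zero (fun _ ↦ norm_nonneg _) (fun n ↦ ?_) sqrt_lim) <;>
    rw [norm_sub_rev]
  exacts [hg n, hgsg n]

/- If `s` denotes the dominating sum, then `u k` is formally `x * s ^ (-1/2) * y k`, constructed as
the limit of `x * g n * y k`. -/
theorem exists_mul_star_self_eq_sum_of_star_mul_self_le_sum {ι : Type*} [Fintype ι] {x : A}
    {y : ι → A} (hxy : star x * x ≤ ∑ k, y k * star (y k)) :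
    ∃ u : ι → A, x * star x = ∑ k, u k * star (u k) ∧
      ∀ k, star (u k) * u k ≤ star (y k) * y k := by
  set s := ∑ k, y k * star (y k)
  have hs : 0 ≤ s := (star_mul_self_nonneg x).trans hxy
  have hy (k) : y k * star (y k) ≤ s :=
    Finset.single_le_sum (fun i _ ↦ mul_star_self_nonneg (y i)) (Finset.mem_univ k)
  have sqrt_star : star (CFC.sqrt s) = CFC.sqrt s := (CFC.sqrt_nonneg s).isSelfAdjoint.star_eq
  have hxs : star x * x ≤ star (CFC.sqrt s) * CFC.sqrt s := by
    rwa [sqrt_star, CFC.sqrt_mul_sqrt_self s]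
  have hys (k) : y k * star (y k) ≤ CFC.sqrt s * star (CFC.sqrt s) := by
    rw [sqrt_star, CFC.sqrt_mul_sqrt_self s]
    exact hy k
  obtain ⟨g, hg_sa, hg_norm, hg, hgsg⟩ := exists_seq_tendsto_sqrt hs
  have star_g (n) : star (g n) = g n := (hg_sa n).star_eq
  choose u hu using fun k ↦ cauchySeq_tendsto_of_complete <|
    cauchySeq_mul_mul_of_star_mul_self_le hxs (hys k) hg.cauchySeq
  refine ⟨u, ?_, fun k ↦ ?_⟩
  · have hxgsg : Tendsto (fun n ↦ x * (g n * s * g n)) atTop (𝓝 x) := by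
      rw [tendsto_iff_norm_sub_tendsto_zero] at hgsg ⊢
      refine squeeze_zero (fun _ ↦ norm_nonneg _) (fun n ↦ ?_) hgsg
      rw [norm_sub_rev, norm_sub_rev _ (CFC.sqrt s)]
      exact norm_sub_mul_le_norm_sub_mul_of_star_mul_self_le hxs _
    refine tendsto_nhds_unique (hxgsg.mul_const (star x)) ?_
    have expand (n) : x * (g n * s * g n) * star x =
        ∑ k, (x * g n * y k) * star (x * g n * y k) := by
      simp only [s, star_mul, star_g, Finset.mul_sum, Finset.sum_mul, mul_assoc]
    simp only [expand]
    exact tendsto_finsetSum _ fun k _ ↦ (hu k).mul (hu k).star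
  · refine le_of_tendsto' ((hu k).star.mul (hu k)) fun n ↦ ?_
    calc star (x * g n * y k) * (x * g n * y k)
        = star (y k) * (star (g n) * (star x * x) * g n) * y k := by
          simp only [star_mul, mul_assoc]
      _ ≤ star (y k) * (star (g n) * s * g n) * y k :=
          star_left_conjugate_le_conjugate (star_left_conjugate_le_conjugate hxy _) _
      _ ≤ ‖star (g n) * s * g n‖ • (star (y k) * y k) :=
          CStarAlgebra.star_left_conjugate_le_norm_smul
            (star_left_conjugate_nonneg hs _).isSelfAdjoint
      _ ≤ star (y k) * y k :=
          smul_le_of_le_one_left (star_mul_self_nonneg (y k)) (by rw [star_g]; exact hg_norm n)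

end RieszDecomposition

section Sandwich

variable {A : Type*} [NonUnitalCStarAlgebra A]

/-- The map `a ↦ c a d` on `A`, where `c` and `d` belong to the unitization `A⁺¹`, in which `A`
is an ideal; it is encoded as the second component of the product computed in `A⁺¹`. -/
noncomputable def sandwich (c d : A⁺¹) : A →ₗ[ℂ] A :=
  sndHom ℂ ℂ A ∘ₗ LinearMap.mulLeftRight ℂ (c, d) ∘ₗ inrHom ℂ ℂ A

@[simp]
lemma inr_sandwich (c d : A⁺¹) (a : A) : (sandwich c d a : A⁺¹) = c * a * d :=
  Unitization.ext (by simp [sandwich]) (by simp [sandwich])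

lemma sandwich_one_inr (a b : A) : sandwich 1 (b : A⁺¹) a = a * b :=
  inr_injective (R := ℂ) (by simp)

lemma sandwich_inr_one (a b : A) : sandwich (b : A⁺¹) 1 a = b * a :=
  inr_injective (R := ℂ) (by simp)

lemma sandwich_one_left (d : A⁺¹) (a : A) : sandwich 1 d a = d.fst • a + a * d.snd := by
  simp [sandwich]

/-- Conjugation `a ↦ u⋆ a u` by a unitary `u` of the unitization, as an endomorphism of `A`. -/
noncomputable def unitaryConj (u : unitary A⁺¹) : A →⋆ₙₐ[ℂ] A where
  __ := sandwich (star (u : A⁺¹)) u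
  map_zero' := map_zero (sandwich (star (u : A⁺¹)) u)
  map_mul' a b := inr_injective (R := ℂ) <| by
    change ((sandwich _ _ (a * b) : A) : A⁺¹) = ((sandwich _ _ a * sandwich _ _ b : A) : A⁺¹)
    calc _ = star (u : A⁺¹) * a * (u * star (u : A⁺¹)) * b * u := by simp [mul_assoc]
      _ = _ := by simp only [inr_mul, inr_sandwich, mul_assoc]
  map_star' a := inr_injective (R := ℂ) <| by
    change ((sandwich _ _ (star a) : A) : A⁺¹) = ((star (sandwich _ _ a) : A) : A⁺¹)
    simp [mul_assoc]

lemma sandwich_polarization (c d : A⁺¹) (a : A) :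
    sandwich (star c) d a = (4⁻¹ : ℂ) • (sandwich (star (c + d)) (c + d) a
      - sandwich (star (c - d)) (c - d) a
      - Complex.I • sandwich (star (c + Complex.I • d)) (c + Complex.I • d) a
      + Complex.I • sandwich (star (c - Complex.I • d)) (c - Complex.I • d) a) := by
  apply inr_injective (R := ℂ)
  simp only [inr_smul, inr_add, inr_sub, inr_sandwich, star_add, star_sub, star_smul, add_mul,
    mul_add, sub_mul, mul_sub, smul_mul_assoc, mul_smul_comm, smul_add, smul_sub, smul_smul,
    Complex.star_def, Complex.conj_I, mul_neg, neg_mul, mul_assoc, Complex.I_mul_I, mul_one,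
    neg_smul, smul_neg, neg_neg]
  module

lemma sandwich_star_smul (r : ℂ) (c : A⁺¹) (x : A) :
    sandwich (star (r • c)) (r • c) x = ‖r‖ ^ 2 • sandwich (star c) c x := by
  apply inr_injective (R := ℂ)
  rw [inr_sandwich, inr_smul, inr_sandwich, star_smul, smul_mul_assoc, smul_mul_assoc,
    mul_smul_comm, smul_smul, ← Complex.coe_smul, Complex.star_def, mul_comm, Complex.mul_conj,
    Complex.normSq_eq_norm_sq]

variable [PartialOrder A] [StarOrderedRing A] {x : A}

lemma sandwich_star_nonneg (hx : 0 ≤ x) (c : A⁺¹) : 0 ≤ sandwich (star c) c x := by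
  rw [← inr_nonneg_iff, inr_sandwich]
  exact star_left_conjugate_nonneg (inr_nonneg_iff.mpr hx) c

lemma sandwich_star_add_le (hx : 0 ≤ x) (c d : A⁺¹) :
    sandwich (star (c + d)) (c + d) x ≤
      (2 : ℝ) • (sandwich (star c) c x + sandwich (star d) d x) := by
  have parallelogram : sandwich (star (c + d)) (c + d) x + sandwich (star (c - d)) (c - d) x =
      (2 : ℝ) • (sandwich (star c) c x + sandwich (star d) d x) := by
    apply inr_injective (R := ℂ)
    simp only [inr_smul, inr_add, inr_sandwich, star_add, star_sub, add_mul, mul_add, sub_mul,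
      mul_sub]
    module
  rw [← parallelogram]
  exact le_add_of_nonneg_right (sandwich_star_nonneg hx (c - d))

end Sandwich

section HereditaryCone

variable {A : Type*} [NonUnitalCStarAlgebra A] [PartialOrder A]

/-- A convex cone of positive elements which contains every positive element dominated by one of its
members. -/
structure IsHereditaryCone (C : PointedCone ℝ A) : Prop where
  nonneg {x : A} : x ∈ C → 0 ≤ x
  mem_of_le {x y : A} : 0 ≤ x → x ≤ y → y ∈ C → x ∈ C

namespace IsHereditaryCone

variable [StarOrderedRing A] {C : PointedCone ℝ A}

lemma exists_realPart_smul_le (hC : IsHereditaryCone C) {k : A}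
    (hk : k ∈ Submodule.span ℂ (C : Set A)) (r : ℂ) : ∃ m ∈ C, (ℜ (r • k) : A) ≤ m := by
  induction hk using Submodule.span_induction generalizing r with
  | mem x hx =>
    have hx0 := hC.nonneg hx
    refine ⟨‖r‖ • x, C.smul_mem (norm_nonneg r) hx, ?_⟩
    calc (ℜ (r • x) : A) = r.re • x := by
          simp [realPart_smul, hx0.isSelfAdjoint.coe_realPart, hx0.isSelfAdjoint.imaginaryPart]
      _ ≤ ‖r‖ • x := smul_le_smul_of_nonneg_right (Complex.re_le_norm r) hx0
  | zero => exact ⟨0, C.zero_mem, by simp⟩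
  | add x y _ _ hx hy =>
    obtain ⟨m, hm, hxm⟩ := hx r
    obtain ⟨n, hn, hyn⟩ := hy r
    exact ⟨m + n, C.add_mem hm hn, by simpa using add_le_add hxm hyn⟩
  | smul s x _ hx => simpa only [smul_smul] using hx (r * s)

theorem mem_of_mem_span (hC : IsHereditaryCone C) {x : A} (hx : 0 ≤ x)
    (h : x ∈ Submodule.span ℂ (C : Set A)) : x ∈ C := by
  obtain ⟨m, hm, hle⟩ := hC.exists_realPart_smul_le h 1
  rw [one_smul, hx.isSelfAdjoint.coe_realPart] at hle
  exact hC.mem_of_le hx hle hm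

lemma sandwich_star_mem (hC : IsHereditaryCone C)
    (hC_conj : ∀ (u : unitary A⁺¹), ∀ x ∈ C, unitaryConj u x ∈ C) {x : A} (hx : x ∈ C) (c : A⁺¹) :
    sandwich (star c) c x ∈ C := by
  have hx0 := hC.nonneg hx
  have hc : c ∈ Submodule.span ℂ (unitary A⁺¹ : Set A⁺¹) :=
    CStarAlgebra.span_unitary A⁺¹ ▸ Submodule.mem_top
  induction hc using Submodule.span_induction with
  | mem u hu => exact hC_conj ⟨u, hu⟩ x hx
  | zero => simp [sandwich]
  | add c d _ _ hc hd =>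
    exact hC.mem_of_le (sandwich_star_nonneg hx0 _) (sandwich_star_add_le hx0 c d)
      (C.smul_mem zero_le_two (C.add_mem hc hd))
  | smul r c _ hc =>
    rw [sandwich_star_smul]
    exact C.smul_mem (by positivity) hc

lemma sandwich_mem_span (hC : IsHereditaryCone C)
    (hC_conj : ∀ (u : unitary A⁺¹), ∀ x ∈ C, unitaryConj u x ∈ C) {k : A}
    (hk : k ∈ Submodule.span ℂ (C : Set A)) (c d : A⁺¹) :
    sandwich c d k ∈ Submodule.span ℂ (C : Set A) := by
  suffices Submodule.span ℂ (C : Set A) ≤ (Submodule.span ℂ (C : Set A)).comap (sandwich c d) from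
    this hk
  refine Submodule.span_le.mpr fun x hx ↦ ?_
  have conj_mem (z : A⁺¹) : sandwich (star z) z x ∈ Submodule.span ℂ (C : Set A) :=
    Submodule.subset_span (hC.sandwich_star_mem hC_conj hx z)
  rw [SetLike.mem_coe, Submodule.mem_comap, ← star_star c, sandwich_polarization]
  exact Submodule.smul_mem _ _ (add_mem (sub_mem (sub_mem (conj_mem _) (conj_mem _))
    (Submodule.smul_mem _ _ (conj_mem _))) (Submodule.smul_mem _ _ (conj_mem _)))

theorem mul_mem_span (hC : IsHereditaryCone C)
    (hC_conj : ∀ (u : unitary A⁺¹), ∀ x ∈ C, unitaryConj u x ∈ C) {k : A}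
    (hk : k ∈ Submodule.span ℂ (C : Set A)) (b : A) :
    k * b ∈ Submodule.span ℂ (C : Set A) ∧ b * k ∈ Submodule.span ℂ (C : Set A) := by
  rw [← sandwich_one_inr, ← sandwich_inr_one]
  exact ⟨hC.sandwich_mem_span hC_conj hk _ _, hC.sandwich_mem_span hC_conj hk _ _⟩

end IsHereditaryCone

end HereditaryCone

/-- The functions `φ` used to define `K(A)₀`, extended to all of `ℝ`: continuous functions with
compact support contained in `(0, ∞)`. -/
structure IsCutoff (φ : ℝ → ℝ) : Prop where
  continuous : Continuous φ
  hasCompactSupport : HasCompactSupport φ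
  tsupport_subset : tsupport φ ⊆ Set.Ioi 0

namespace IsCutoff

variable {φ f : ℝ → ℝ}

lemma map_zero (hφ : IsCutoff φ) : φ 0 = 0 :=
  image_eq_zero_of_notMem_tsupport fun h ↦ lt_irrefl (0 : ℝ) (hφ.tsupport_subset h)

lemma of_eq_zero (hφ : IsCutoff φ) (hf : Continuous f) (h : ∀ t, φ t = 0 → f t = 0) :
    IsCutoff f := by
  have hsupp : tsupport f ⊆ tsupport φ := closure_mono fun t ht ht0 ↦ ht (h t ht0)
  exact ⟨hf, hφ.hasCompactSupport.of_isClosed_subset (isClosed_tsupport f) hsupp,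
    hsupp.trans hφ.tsupport_subset⟩

lemma exists_eqOn_one {S : Set ℝ} (hS : IsCompact S) (hS_pos : S ⊆ Set.Ioi 0) :
    ∃ ψ, IsCutoff ψ ∧ Set.EqOn ψ 1 S ∧ ∀ t, ψ t ∈ Set.Icc 0 1 := by
  obtain ⟨ψ, hψ_one, hψ_compact, hψ_supp, hψ_mem⟩ :=
    exists_continuousMap_one_of_isCompact_subset_isOpen hS isOpen_Ioi hS_pos
  exact ⟨ψ, ⟨ψ.continuous, hψ_compact, hψ_supp⟩, hψ_one, hψ_mem⟩

lemma exists_mul_eq_self (hφ : IsCutoff φ) : ∃ ψ, IsCutoff ψ ∧ ∀ t, φ t * ψ t = φ t := by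
  obtain ⟨ψ, hψ, hψ_one, -⟩ := exists_eqOn_one hφ.hasCompactSupport hφ.tsupport_subset
  refine ⟨ψ, hψ, fun t ↦ ?_⟩
  by_cases ht : φ t = 0
  · rw [ht, zero_mul]
  · rw [hψ_one (subset_tsupport φ ht), Pi.one_apply, mul_one]

lemma exists_abs_sub_le {ε : ℝ} (hε : 0 < ε) (C : ℝ) :
    ∃ φ, IsCutoff φ ∧ (∀ t, 0 ≤ t → 0 ≤ φ t) ∧ ∀ t ∈ Set.Icc 0 C, |t - φ t| ≤ ε := by
  obtain ⟨ψ, hψ, hψ_one, hψ_mem⟩ := exists_eqOn_one (isCompact_Icc (a := ε) (b := C))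
    fun t ht ↦ hε.trans_le ht.1
  refine ⟨fun t ↦ t * ψ t, hψ.of_eq_zero (continuous_id.mul hψ.continuous) (by simp +contextual),
    fun t ht ↦ mul_nonneg ht (hψ_mem t).1, fun t ⟨ht0, htC⟩ ↦ ?_⟩
  obtain ⟨h0, h1⟩ := hψ_mem t
  rcases le_total ε t with hεt | htε
  · simp [hψ_one ⟨hεt, htC⟩, hε.le]
  · rw [← mul_one_sub, abs_of_nonneg (mul_nonneg ht0 (sub_nonneg.mpr h1))]
    exact (mul_le_of_le_one_right ht0 (sub_le_self 1 h0)).trans htε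

end IsCutoff

section PedersenGenerators

variable (A : Type*) [NonUnitalCStarAlgebra A] [PartialOrder A]

/-- The set `K(A)₀` of elements `φ(a)` with `a` positive and `φ` continuous with compact support
contained in `(0, ∞)`. -/
def pedersenGenerators : Set A :=
  {x | ∃ a : A, 0 ≤ a ∧ ∃ φ : ℝ → ℝ, IsCutoff φ ∧ x = cfcₙ φ a}

variable {A} {x : A}

lemma IsCutoff.cfcₙ_mem {φ : ℝ → ℝ} (hφ : IsCutoff φ) {a : A} (ha : 0 ≤ a) :
    cfcₙ φ a ∈ pedersenGenerators A :=
  ⟨a, ha, φ, hφ, rfl⟩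

namespace pedersenGenerators

lemma smul_mem (hx : x ∈ pedersenGenerators A) (r : ℝ) : r • x ∈ pedersenGenerators A := by
  obtain ⟨a, ha, φ, hφ, rfl⟩ := hx
  rw [← cfcₙ_const_mul r φ a hφ.continuous.continuousOn hφ.map_zero]
  exact (hφ.of_eq_zero (hφ.continuous.const_mul r) (by simp +contextual)).cfcₙ_mem ha

lemma exists_mul_eq_self (hx : x ∈ pedersenGenerators A) : ∃ e : A, x * e = x := by
  obtain ⟨a, -, φ, hφ, rfl⟩ := hx
  obtain ⟨ψ, hψ, hφψ⟩ := hφ.exists_mul_eq_self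
  refine ⟨cfcₙ ψ a, ?_⟩
  rw [← cfcₙ_mul φ ψ a hφ.continuous.continuousOn hφ.map_zero hψ.continuous.continuousOn
    hψ.map_zero]
  simp only [hφψ]

variable [StarOrderedRing A]

lemma map_mem {B : Type*} [NonUnitalCStarAlgebra B] [PartialOrder B] [StarOrderedRing B]
    (f : A →⋆ₙₐ[ℂ] B) (hx : x ∈ pedersenGenerators A) : f x ∈ pedersenGenerators B := by
  obtain ⟨a, ha, φ, hφ, rfl⟩ := hx
  have hfa : 0 ≤ f a := map_nonneg f ha
  rw [f.map_cfcₙ φ a hφ.continuous.continuousOn hφ.map_zero (map_continuous f) ha.isSelfAdjoint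
    hfa.isSelfAdjoint]
  exact hφ.cfcₙ_mem hfa

lemma exists_le_mul_star (hx : x ∈ pedersenGenerators A) :
    ∃ w ∈ pedersenGenerators A, x ≤ w * star w := by
  obtain ⟨a, ha, φ, hφ, rfl⟩ := hx
  have hw : IsCutoff fun t ↦ √|φ t| :=
    hφ.of_eq_zero hφ.continuous.abs.sqrt (by simp +contextual)
  refine ⟨_, hw.cfcₙ_mem ha, ?_⟩
  rw [IsSelfAdjoint.cfcₙ.star_eq, ← cfcₙ_mul _ _ a hw.continuous.continuousOn hw.map_zero
    hw.continuous.continuousOn hw.map_zero]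
  simp only [Real.mul_self_sqrt (abs_nonneg _)]
  exact cfcₙ_mono (fun t _ ↦ le_abs_self (φ t)) hφ.continuous.continuousOn
    hφ.continuous.abs.continuousOn hφ.map_zero (by simp [hφ.map_zero])

lemma exists_nonneg_norm_sub_le {a : A} (ha : 0 ≤ a) {ε : ℝ} (hε : 0 < ε) :
    ∃ x ∈ pedersenGenerators A, 0 ≤ x ∧ ‖a - x‖ ≤ ε := by
  obtain ⟨φ, hφ, hφ_nonneg, hφ_sub⟩ := IsCutoff.exists_abs_sub_le hε ‖a‖
  have nonneg_of_mem : ∀ t ∈ quasispectrum ℝ a, 0 ≤ t := quasispectrum_nonneg_of_nonneg a ha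
  refine ⟨cfcₙ φ a, hφ.cfcₙ_mem ha, cfcₙ_nonneg fun t ht ↦ hφ_nonneg t (nonneg_of_mem t ht), ?_⟩
  nth_rw 1 [← cfcₙ_id' ℝ a]
  rw [← cfcₙ_sub (fun t ↦ t) φ a continuousOn_id rfl hφ.continuous.continuousOn hφ.map_zero]
  refine norm_cfcₙ_le fun t ht ↦ hφ_sub t ⟨nonneg_of_mem t ht, (le_abs_self t).trans ?_⟩
  exact NonUnitalIsometricContinuousFunctionalCalculus.norm_quasispectrum_le a ht

end pedersenGenerators

end PedersenGenerators

section PedersenCone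

variable (A : Type*) [NonUnitalCStarAlgebra A] [PartialOrder A] [StarOrderedRing A]

/-- The convex cone `K(A)₊` of positive elements dominated by a finite sum of elements of
`K(A)₀`. -/
def pedersenCone : PointedCone ℝ A where
  carrier := {x | 0 ≤ x ∧
    ∃ (n : ℕ) (y : Fin n → A), (∀ j, y j ∈ pedersenGenerators A) ∧ x ≤ ∑ j, y j}
  zero_mem' := ⟨le_rfl, 0, Fin.elim0, fun j ↦ j.elim0, by simp⟩
  add_mem' := by
    rintro x x' ⟨hx, n, y, hy, hxy⟩ ⟨hx', n', y', hy', hxy'⟩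
    refine ⟨add_nonneg hx hx', n + n', Fin.append y y', ?_, ?_⟩
    · exact Fin.addCases (by simpa using hy) (by simpa using hy')
    · simpa [Fin.sum_univ_add] using add_le_add hxy hxy'
  smul_mem' := by
    rintro r x ⟨hx, n, y, hy, hxy⟩
    refine ⟨smul_nonneg r.2 hx, n, fun j ↦ (r : ℝ) • y j,
      fun j ↦ pedersenGenerators.smul_mem (hy j) r, ?_⟩
    rw [← Finset.smul_sum]
    exact smul_le_smul_of_nonneg_left hxy r.2

/-- The Pedersen ideal `K(A)`, the complex span of `K(A)₊`. It is a `Submodule` because `A` may lack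
a unit, so that an ideal of the ring `A` need not be a complex subspace. -/
def pedersenIdeal : Submodule ℂ A :=
  Submodule.span ℂ (pedersenCone A)

variable {A} {x : A}

lemma pedersenGenerators.mem_pedersenCone (hx : x ∈ pedersenGenerators A) (hx0 : 0 ≤ x) :
    x ∈ pedersenCone A :=
  ⟨hx0, 1, fun _ ↦ x, fun _ ↦ hx, by simp⟩

lemma isHereditaryCone_pedersenCone : IsHereditaryCone (pedersenCone A) where
  nonneg hx := hx.1
  mem_of_le := fun hx hxy ⟨_, n, z, hz, hyz⟩ ↦ ⟨hx, n, z, hz, hxy.trans hyz⟩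

lemma map_mem_pedersenCone {B : Type*} [NonUnitalCStarAlgebra B] [PartialOrder B]
    [StarOrderedRing B] (f : A →⋆ₙₐ[ℂ] B) (hx : x ∈ pedersenCone A) : f x ∈ pedersenCone B := by
  obtain ⟨hx0, n, y, hy, hxy⟩ := hx
  refine ⟨map_nonneg f hx0, n, fun j ↦ f (y j), fun j ↦ pedersenGenerators.map_mem f (hy j), ?_⟩
  rw [← map_sum]
  exact OrderHomClass.mono f hxy

lemma exists_eq_sum_mul_star_of_mem_pedersenCone (hx : x ∈ pedersenCone A) :
    ∃ (n : ℕ) (u e : Fin n → A), (∀ k, u k * e k = u k) ∧ x = ∑ k, u k * star (u k) := by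
  obtain ⟨hx0, n, y, hy, hxy⟩ := hx
  choose w hw hyw using fun k ↦ pedersenGenerators.exists_le_mul_star (hy k)
  choose e hwe using fun k ↦ pedersenGenerators.exists_mul_eq_self (hw k)
  have star_sqrt : star (CFC.sqrt x) = CFC.sqrt x := (CFC.sqrt_nonneg x).isSelfAdjoint.star_eq
  have sqrt_le : star (CFC.sqrt x) * CFC.sqrt x ≤ ∑ k, w k * star (w k) := by
    rw [star_sqrt, CFC.sqrt_mul_sqrt_self x]
    exact hxy.trans (Finset.sum_le_sum fun k _ ↦ hyw k)
  obtain ⟨u, hu, huw⟩ := exists_mul_star_self_eq_sum_of_star_mul_self_le_sum sqrt_le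
  refine ⟨n, u, e, fun k ↦ ?_, by rw [← hu, star_sqrt, CFC.sqrt_mul_sqrt_self x]⟩
  have := norm_sub_mul_le_norm_sub_mul_of_star_mul_self_le (huw k) (e k)
  rw [hwe, sub_self, norm_zero, norm_le_zero_iff, sub_eq_zero] at this
  exact this.symm

end PedersenCone

section DenseIdeal

variable {A : Type*} [NonUnitalCStarAlgebra A] {I : Submodule ℂ A}

lemma mem_of_mul_eq_self_of_dense (hI : ∀ a ∈ I, ∀ b : A, a * b ∈ I ∧ b * a ∈ I)
    (hI_dense : Dense (I : Set A)) {x e : A} (hxe : x * e = x) : x ∈ I := by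
  obtain ⟨y, hy, hye⟩ := hI_dense.exists_dist_lt e one_pos
  rw [dist_eq_norm, ← norm_inr (𝕜 := ℂ)] at hye
  obtain ⟨v, hv⟩ := (isUnit_one_sub_of_norm_lt_one hye).exists_right_inv
  have hx : sandwich 1 v (x * y) = x := by
    apply inr_injective (R := ℂ)
    calc ((sandwich 1 v (x * y) : A) : A⁺¹) = x * (1 - ((e - y : A) : A⁺¹)) * v := by
          rw [inr_sandwich, one_mul, mul_sub, mul_one, ← inr_mul, mul_sub, hxe, inr_sub,
            sub_sub_cancel]
      _ = x := by rw [mul_assoc, hv, mul_one]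
  have hxy : x * y ∈ I := (hI y hy x).2
  rw [← hx, sandwich_one_left]
  exact I.add_mem (I.smul_mem _ hxy) (hI _ hxy _).1

variable [PartialOrder A] [StarOrderedRing A]

theorem pedersenIdeal_le_of_dense (hI : ∀ a ∈ I, ∀ b : A, a * b ∈ I ∧ b * a ∈ I)
    (hI_dense : Dense (I : Set A)) : pedersenIdeal A ≤ I := by
  refine Submodule.span_le.mpr fun x hx ↦ ?_
  obtain ⟨n, u, e, hue, rfl⟩ := exists_eq_sum_mul_star_of_mem_pedersenCone hx
  exact I.sum_mem fun k _ ↦ (hI _ (mem_of_mul_eq_self_of_dense hI hI_dense (hue k)) _).1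

end DenseIdeal

section PedersenIdeal

variable {A : Type*} [NonUnitalCStarAlgebra A] [PartialOrder A] [StarOrderedRing A]

theorem mul_mem_pedersenIdeal {a : A} (ha : a ∈ pedersenIdeal A) (b : A) :
    a * b ∈ pedersenIdeal A ∧ b * a ∈ pedersenIdeal A :=
  isHereditaryCone_pedersenCone.mul_mem_span (fun u _ ↦ map_mem_pedersenCone (unitaryConj u)) ha b

theorem mem_pedersenIdeal_of_le {x y : A} (hx : 0 ≤ x) (hxy : x ≤ y) (hy : y ∈ pedersenIdeal A) :
    x ∈ pedersenIdeal A :=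
  have hC := isHereditaryCone_pedersenCone (A := A)
  Submodule.subset_span <| hC.mem_of_le hx hxy <| hC.mem_of_mem_span (hx.trans hxy) hy

theorem dense_pedersenIdeal : Dense (pedersenIdeal A : Set A) := by
  rw [Submodule.dense_iff_topologicalClosure_eq_top, eq_top_iff, ← CStarAlgebra.span_nonneg,
    Submodule.span_le]
  refine fun a ha ↦ Metric.mem_closure_iff.mpr fun ε hε ↦ ?_
  obtain ⟨x, hx, hx0, hax⟩ := pedersenGenerators.exists_nonneg_norm_sub_le ha (half_pos hε)
  exact ⟨x, Submodule.subset_span (pedersenGenerators.mem_pedersenCone hx hx0),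
    (dist_eq_norm a x).trans_lt (hax.trans_lt (half_lt_self hε))⟩

end PedersenIdeal

/-- The Pedersen ideal `K(A)`, the `ℂ`-linear span of `K(A)₊`, is a dense
hereditary two-sided ideal of the C*-algebra `A`, minimal among dense two-sided ideals. -/
theorem stmt3 (A : Type*) [NonUnitalCStarAlgebra A] [PartialOrder A] [StarOrderedRing A]
    (K₀ Kplus : Set A) (K : Submodule ℂ A)
    (hK₀ : K₀ = {x : A | ∃ a : A, 0 ≤ a ∧ ∃ φ : ℝ → ℝ, Continuous φ ∧ HasCompactSupport φ ∧
      tsupport φ ⊆ Set.Ioi (0 : ℝ) ∧ x = cfcₙ φ a})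
    (hKplus : Kplus = {x : A | 0 ≤ x ∧
      ∃ (n : ℕ) (y : Fin n → A), (∀ j, y j ∈ K₀) ∧ x ≤ ∑ j, y j})
    (hK : K = Submodule.span ℂ Kplus) :
    -- `K(A)` is a two-sided ideal
    (∀ a ∈ K, ∀ b : A, a * b ∈ K ∧ b * a ∈ K) ∧
    -- `K(A)` is dense
    Dense (K : Set A) ∧
    -- `K(A)` is hereditary
    (∀ x y : A, 0 ≤ x → x ≤ y → y ∈ K → x ∈ K) ∧
    -- `K(A)` is minimal among dense two-sided ideals
    (∀ I : Submodule ℂ A, (∀ a ∈ I, ∀ b : A, a * b ∈ I ∧ b * a ∈ I) →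
      Dense (I : Set A) → K ≤ I) := by
  have hK₀_eq : K₀ = pedersenGenerators A := by
    rw [hK₀]
    exact Set.ext fun x ↦
      ⟨fun ⟨a, ha, φ, hφ, hφ_compact, hφ_supp, hx⟩ ↦ ⟨a, ha, φ, ⟨hφ, hφ_compact, hφ_supp⟩, hx⟩,
        fun ⟨a, ha, φ, ⟨hφ, hφ_compact, hφ_supp⟩, hx⟩ ↦ ⟨a, ha, φ, hφ, hφ_compact, hφ_supp, hx⟩⟩
  have hK_eq : K = pedersenIdeal A := by
    rw [hK, hKplus, hK₀_eq]
    rfl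
  rw [hK_eq]
  exact ⟨fun _ ↦ mul_mem_pedersenIdeal, dense_pedersenIdeal, fun _ _ ↦ mem_pedersenIdeal_of_le,
    fun _ ↦ pedersenIdeal_le_of_dense⟩
end

section
/- Let H be a complex Hilbert space and K(H) the C*-algebra of compact operators on H. For every closed right ideal L of K(H) there exists a unique closed linear subspace V ⊆ H such that L = { a ∈ K(H) | a(H) ⊆ V }; moreover, L is a minimal nonzero closed right ideal of K(H) if and only if the corresponding subspace V is one-dimensional. -/
/-!
Each nonzero operator of rank one is `φ(·) v` for a functional `φ` and a vector `v`. From a closed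
right ideal `L` one recovers `V` as the set of those `v` for which every `φ(·) v` belongs to `L`.
If `a ∈ L`, then `a ∘ φ(·) x = φ(·) (a x)` lies in `L`, so `a` has range in `V`. Conversely, a
compact `a` with range in `V` is a norm limit of operators `P ∘ a`, where `P` is the orthogonal
projection onto a finite-dimensional subspace of the range of `a`; such a `P ∘ a` is a finite sum
of operators `φ(·) v` with `v ∈ V`, hence lies in `L`, and therefore so does `a`.

As the correspondence preserves inclusions, minimal nonzero ideals correspond to lines.
-/

section NormedSpace

variable {𝕜 E F : Type*} [RCLike 𝕜] [NormedAddCommGroup E] [NormedSpace 𝕜 E]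
  [NormedAddCommGroup F] [NormedSpace 𝕜 F]

/-- The space `{a ∈ K(E, F) | a(E) ⊆ V}` of compact operators with range in `V`, as a subspace of
the bounded operators. -/
def compactOperatorsInto (E : Type*) [NormedAddCommGroup E] [NormedSpace 𝕜 E]
    (V : Submodule 𝕜 F) : Submodule 𝕜 (E →L[𝕜] F) where
  carrier := {a | IsCompactOperator a ∧ ∀ x, a x ∈ V}
  zero_mem' := ⟨isCompactOperator_zero, fun _ ↦ V.zero_mem⟩
  add_mem' ha hb := ⟨ha.1.add hb.1, fun x ↦ V.add_mem (ha.2 x) (hb.2 x)⟩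
  smul_mem' c _ ha := ⟨ha.1.smul c, fun x ↦ V.smul_mem c (ha.2 x)⟩

/-- The subspace of vectors `v` such that every operator `φ(·) v`, with `φ` a continuous linear
functional, belongs to `L`. It recovers the subspace `V` attached to a closed right ideal `L`.
Functionals are used rather than inner products so that no Riesz representation is required. -/
noncomputable def rankOneSupport (L : Submodule 𝕜 (E →L[𝕜] F)) : Submodule 𝕜 F :=
  ⨅ φ : StrongDual 𝕜 E, L.comap (ContinuousLinearMap.smulRightL 𝕜 E F φ).toLinearMap

theorem mem_compactOperatorsInto {V : Submodule 𝕜 F} {a : E →L[𝕜] F} :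
    a ∈ compactOperatorsInto E V ↔ IsCompactOperator a ∧ ∀ x, a x ∈ V :=
  Iff.rfl

theorem mem_rankOneSupport {L : Submodule 𝕜 (E →L[𝕜] F)} {v : F} :
    v ∈ rankOneSupport L ↔ ∀ φ : StrongDual 𝕜 E, φ.smulRight v ∈ L := by
  simp [rankOneSupport]

theorem compactOperatorsInto_mono : Monotone (compactOperatorsInto (𝕜 := 𝕜) (F := F) E) :=
  fun _ _ hVW _ ha ↦ ⟨ha.1, fun x ↦ hVW (ha.2 x)⟩

theorem rankOneSupport_mono : Monotone (rankOneSupport (𝕜 := 𝕜) (E := E) (F := F)) :=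
  fun _ _ hLM _ hv ↦ mem_rankOneSupport.2 fun φ ↦ hLM (mem_rankOneSupport.1 hv φ)

theorem compactOperatorsInto_bot : compactOperatorsInto E (⊥ : Submodule 𝕜 F) = ⊥ :=
  (Submodule.eq_bot_iff _).2 fun _ ha ↦ ContinuousLinearMap.ext ha.2

theorem isClosed_rankOneSupport {L : Submodule 𝕜 (E →L[𝕜] F)}
    (hL : IsClosed (L : Set (E →L[𝕜] F))) : IsClosed (rankOneSupport L : Set F) := by
  rw [rankOneSupport, Submodule.coe_iInf]
  exact isClosed_iInter fun φ ↦
    hL.preimage (ContinuousLinearMap.smulRightL 𝕜 E F φ).continuous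

theorem isCompactOperator_of_forall_mem_finiteDimensional {V : Submodule 𝕜 F}
    [FiniteDimensional 𝕜 V] {a : E →L[𝕜] F} (ha : ∀ x, a x ∈ V) : IsCompactOperator a :=
  have : ProperSpace V := FiniteDimensional.proper_rclike 𝕜 V
  (isCompactOperator_of_locallyCompactSpace_dom (a.codRestrict V ha)).clm_comp V.subtypeL

theorem isCompactOperator_smulRight (φ : StrongDual 𝕜 E) (v : F) :
    IsCompactOperator (φ.smulRight v) :=
  isCompactOperator_of_forall_mem_finiteDimensional (V := 𝕜 ∙ v) fun x ↦
    Submodule.smul_mem _ (φ x) (Submodule.mem_span_singleton_self v)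

theorem isClosed_compactOperatorsInto_of_finiteDimensional (V : Submodule 𝕜 F)
    [FiniteDimensional 𝕜 V] : IsClosed (compactOperatorsInto E V : Set (E →L[𝕜] F)) := by
  have h_inter : (compactOperatorsInto E V : Set (E →L[𝕜] F)) =
      ⋂ x, (fun a : E →L[𝕜] F ↦ a x) ⁻¹' V := by
    ext a
    simpa [mem_compactOperatorsInto] using isCompactOperator_of_forall_mem_finiteDimensional
  rw [h_inter]
  exact isClosed_iInter fun x ↦ V.closed_of_finiteDimensional.preimage (by fun_prop)

theorem rankOneSupport_compactOperatorsInto (V : Submodule 𝕜 F) :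
    rankOneSupport (compactOperatorsInto F V) = V := by
  ext v
  rw [mem_rankOneSupport]
  refine ⟨fun hv ↦ ?_, fun hv φ ↦ ⟨isCompactOperator_smulRight φ v, fun x ↦ V.smul_mem _ hv⟩⟩
  rcases eq_or_ne v 0 with rfl | hv_ne
  · exact V.zero_mem
  · obtain ⟨φ, hφ⟩ := SeparatingDual.exists_eq_one (R := 𝕜) hv_ne
    simpa [hφ] using (hv φ).2 v

theorem compactOperatorsInto_injective :
    Function.Injective (compactOperatorsInto (𝕜 := 𝕜) (F := F) F) :=
  Function.LeftInverse.injective rankOneSupport_compactOperatorsInto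

theorem compactOperatorsInto_eq_bot_iff {V : Submodule 𝕜 F} :
    compactOperatorsInto F V = ⊥ ↔ V = ⊥ := by
  rw [← compactOperatorsInto_bot, compactOperatorsInto_injective.eq_iff]

/-- Closed right ideals of the algebra `K(F)` of compact operators, encoded as subspaces of the
bounded operators. -/
structure IsClosedCompactRightIdeal (L : Submodule 𝕜 (F →L[𝕜] F)) : Prop where
  isCompactOperator : ∀ a ∈ L, IsCompactOperator a
  isClosed : IsClosed (L : Set (F →L[𝕜] F))
  mul_mem : ∀ a ∈ L, ∀ b : F →L[𝕜] F, IsCompactOperator b → a * b ∈ L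

/-- Minimal nonzero closed right ideals of the algebra `K(F)` of compact operators. -/
structure IsMinimalClosedCompactRightIdeal (L : Submodule 𝕜 (F →L[𝕜] F)) : Prop
    extends IsClosedCompactRightIdeal L where
  ne_bot : L ≠ ⊥
  eq_bot_or_eq : ∀ L', IsClosedCompactRightIdeal L' → L' ≤ L → L' = ⊥ ∨ L' = L

theorem IsClosedCompactRightIdeal.le_compactOperatorsInto_rankOneSupport
    {L : Submodule 𝕜 (F →L[𝕜] F)} (hL : IsClosedCompactRightIdeal L) :
    L ≤ compactOperatorsInto F (rankOneSupport L) := by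
  refine fun a ha ↦ ⟨hL.isCompactOperator a ha, fun x ↦ mem_rankOneSupport.2 fun φ ↦ ?_⟩
  have h_comp : a * φ.smulRight x = φ.smulRight (a x) := by
    ext
    simp
  exact h_comp ▸ hL.mul_mem a ha _ (isCompactOperator_smulRight φ x)

theorem isClosedCompactRightIdeal_compactOperatorsInto (V : Submodule 𝕜 F)
    [FiniteDimensional 𝕜 V] : IsClosedCompactRightIdeal (compactOperatorsInto F V) where
  isCompactOperator _ ha := ha.1
  isClosed := isClosed_compactOperatorsInto_of_finiteDimensional V
  mul_mem _ ha b _ := ⟨ha.1.comp_clm b, fun x ↦ ha.2 (b x)⟩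

theorem IsMinimalClosedCompactRightIdeal.isAtom {V : Submodule 𝕜 F}
    (hV : IsMinimalClosedCompactRightIdeal (compactOperatorsInto F V)) : IsAtom V := by
  have hV_ne : V ≠ ⊥ := fun h ↦ hV.ne_bot (compactOperatorsInto_eq_bot_iff.2 h)
  obtain ⟨v, hv, hv_ne⟩ := V.ne_bot_iff.1 hV_ne
  have h_line : compactOperatorsInto F (𝕜 ∙ v) ≤ compactOperatorsInto F V :=
    compactOperatorsInto_mono ((Submodule.span_singleton_le_iff_mem v V).2 hv)
  have h_span : 𝕜 ∙ v = V := by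
    rcases hV.eq_bot_or_eq _ (isClosedCompactRightIdeal_compactOperatorsInto _) h_line with h | h
    · rw [compactOperatorsInto_eq_bot_iff, Submodule.span_singleton_eq_bot] at h
      exact absurd h hv_ne
    · exact compactOperatorsInto_injective h
  exact h_span ▸ nonzero_span_atom v hv_ne

end NormedSpace

section InnerProductSpace

variable {𝕜 E F : Type*} [RCLike 𝕜] [NormedAddCommGroup E] [NormedSpace 𝕜 E]
  [NormedAddCommGroup F] [InnerProductSpace 𝕜 F]

theorem norm_sub_starProjection_le (S : Submodule 𝕜 F) [S.HasOrthogonalProjection] (v : F)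
    {w : F} (hw : w ∈ S) : ‖v - S.starProjection v‖ ≤ ‖v - w‖ := by
  rw [Submodule.starProjection_minimal]
  exact ciInf_le (f := fun u : S ↦ ‖v - u‖) ⟨0, Set.forall_mem_range.2 fun _ ↦ norm_nonneg _⟩
    ⟨w, hw⟩

-- `S` is spanned by a finite `ε`-net of the image of the unit ball.
theorem exists_norm_sub_starProjection_comp_le {a : E →L[𝕜] F} (ha : IsCompactOperator a)
    {ε : ℝ} (hε : 0 < ε) :
    ∃ (S : Submodule 𝕜 F) (_ : FiniteDimensional 𝕜 S),
      S ≤ a.range ∧ ‖a - S.starProjection ∘L a‖ ≤ ε := by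
  have h_bdd : TotallyBounded (a '' Metric.closedBall 0 1) :=
    (ha.isCompact_closure_image_closedBall (f := a.toLinearMap) 1).totallyBounded.subset
      subset_closure
  obtain ⟨t, ht_image, ht_finite, ht_cover⟩ := Metric.finite_approx_of_totallyBounded h_bdd ε hε
  have : FiniteDimensional 𝕜 (Submodule.span 𝕜 t) := FiniteDimensional.span_of_finite 𝕜 ht_finite
  refine ⟨Submodule.span 𝕜 t, this,
    Submodule.span_le.2 (ht_image.trans (Set.image_subset_range _ _)),
    ContinuousLinearMap.opNorm_le_of_unit_norm hε.le fun x hx ↦ ?_⟩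
  obtain ⟨w, hwt, hw⟩ := Set.mem_iUnion₂.1 (ht_cover ⟨x, by simp [hx], rfl⟩)
  calc ‖a x - (Submodule.span 𝕜 t).starProjection (a x)‖
      ≤ ‖a x - w‖ := norm_sub_starProjection_le _ _ (Submodule.subset_span hwt)
    _ ≤ ε := (mem_ball_iff_norm.1 hw).le

theorem starProjection_comp_mem {L : Submodule 𝕜 (E →L[𝕜] F)} {S : Submodule 𝕜 F}
    [FiniteDimensional 𝕜 S] (hS : S ≤ rankOneSupport L) (a : E →L[𝕜] F) :
    S.starProjection ∘L a ∈ L := by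
  let e := stdOrthonormalBasis 𝕜 S
  have h_sum : S.starProjection ∘L a =
      ∑ i, (innerSL 𝕜 (e i : F) ∘L a).smulRight (e i : F) := by
    rw [e.starProjection_eq_sum_rankOne, ContinuousLinearMap.finsetSum_comp]
    rfl
  rw [h_sum]
  exact L.sum_mem fun i _ ↦ mem_rankOneSupport.1 (hS (e i).2) _

theorem compactOperatorsInto_rankOneSupport_le {L : Submodule 𝕜 (E →L[𝕜] F)}
    (hL : IsClosed (L : Set (E →L[𝕜] F))) : compactOperatorsInto E (rankOneSupport L) ≤ L := by
  intro a ha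
  refine hL.closure_subset (Metric.mem_closure_iff.2 fun ε hε ↦ ?_)
  obtain ⟨S, _, hS_range, hS_norm⟩ := exists_norm_sub_starProjection_comp_le ha.1 (half_pos hε)
  have hS : S ≤ rankOneSupport L := hS_range.trans (by rintro _ ⟨x, rfl⟩; exact ha.2 x)
  refine ⟨S.starProjection ∘L a, starProjection_comp_mem hS a, ?_⟩
  rw [dist_eq_norm]
  exact hS_norm.trans_lt (half_lt_self hε)

theorem IsClosedCompactRightIdeal.compactOperatorsInto_rankOneSupport
    {L : Submodule 𝕜 (F →L[𝕜] F)} (hL : IsClosedCompactRightIdeal L) :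
    compactOperatorsInto F (rankOneSupport L) = L :=
  (compactOperatorsInto_rankOneSupport_le hL.isClosed).antisymm
    hL.le_compactOperatorsInto_rankOneSupport

theorem isMinimalClosedCompactRightIdeal_of_isAtom {V : Submodule 𝕜 F} (hV : IsAtom V) :
    IsMinimalClosedCompactRightIdeal (compactOperatorsInto F V) := by
  have : FiniteDimensional 𝕜 V :=
    .of_finrank_pos (by rw [Submodule.isAtom_iff_finrank_eq_one.1 hV]; exact one_pos)
  refine ⟨isClosedCompactRightIdeal_compactOperatorsInto V,
    fun h ↦ hV.1 (compactOperatorsInto_eq_bot_iff.1 h), fun L hL hLV ↦ ?_⟩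
  have h_le : rankOneSupport L ≤ V :=
    (rankOneSupport_mono hLV).trans_eq (rankOneSupport_compactOperatorsInto V)
  rw [← hL.compactOperatorsInto_rankOneSupport, compactOperatorsInto_eq_bot_iff]
  exact (hV.le_iff.1 h_le).imp_right (congrArg _)

theorem isMinimalClosedCompactRightIdeal_iff_finrank_eq_one {V : Submodule 𝕜 F} :
    IsMinimalClosedCompactRightIdeal (compactOperatorsInto F V) ↔ Module.finrank 𝕜 V = 1 := by
  rw [← Submodule.isAtom_iff_finrank_eq_one]
  exact ⟨IsMinimalClosedCompactRightIdeal.isAtom, isMinimalClosedCompactRightIdeal_of_isAtom⟩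

end InnerProductSpace

theorem stmt9_general {𝕜 H : Type*} [RCLike 𝕜] [NormedAddCommGroup H] [InnerProductSpace 𝕜 H]
    (L : Submodule 𝕜 (H →L[𝕜] H))
    (hLcompact : ∀ a ∈ L, IsCompactOperator a)
    (hLclosed : IsClosed (L : Set (H →L[𝕜] H)))
    (hLright : ∀ a ∈ L, ∀ b : H →L[𝕜] H, IsCompactOperator b → a * b ∈ L) :
    (∃! V : Submodule 𝕜 H, IsClosed (V : Set H) ∧
      (L : Set (H →L[𝕜] H)) = {a : H →L[𝕜] H | IsCompactOperator a ∧ ∀ x : H, a x ∈ V}) ∧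
    (∀ V : Submodule 𝕜 H,
      (L : Set (H →L[𝕜] H)) = {a : H →L[𝕜] H | IsCompactOperator a ∧ ∀ x : H, a x ∈ V} →
      ((L ≠ ⊥ ∧ ∀ L' : Submodule 𝕜 (H →L[𝕜] H),
          (∀ a ∈ L', IsCompactOperator a) → IsClosed (L' : Set (H →L[𝕜] H)) →
          (∀ a ∈ L', ∀ b : H →L[𝕜] H, IsCompactOperator b → a * b ∈ L') →
          L' ≤ L → L' = ⊥ ∨ L' = L) ↔
        Module.finrank 𝕜 V = 1)) := by
  have hL : IsClosedCompactRightIdeal L := ⟨hLcompact, hLclosed, hLright⟩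
  have h_coe (V : Submodule 𝕜 H) : (L : Set (H →L[𝕜] H)) =
      {a : H →L[𝕜] H | IsCompactOperator a ∧ ∀ x : H, a x ∈ V} ↔ L = compactOperatorsInto H V :=
    SetLike.coe_set_eq (q := compactOperatorsInto H V)
  simp only [h_coe]
  refine ⟨⟨rankOneSupport L, ⟨isClosed_rankOneSupport hLclosed,
    hL.compactOperatorsInto_rankOneSupport.symm⟩, ?_⟩, ?_⟩
  · rintro V ⟨-, rfl⟩
    exact (rankOneSupport_compactOperatorsInto V).symm
  · rintro V rfl
    rw [← isMinimalClosedCompactRightIdeal_iff_finrank_eq_one]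
    exact ⟨fun h ↦ ⟨hL, h.1, fun L' hL' ↦ h.2 L' hL'.1 hL'.2 hL'.3⟩,
      fun h ↦ ⟨h.ne_bot, fun L' h₁ h₂ h₃ ↦ h.eq_bot_or_eq L' ⟨h₁, h₂, h₃⟩⟩⟩

/-- For a complex Hilbert space `H`, every closed right ideal `L` of the
C*-algebra `K(H)` of compact operators is of the form `{a ∈ K(H) | a(H) ⊆ V}` for a unique
closed subspace `V ⊆ H`; and `L` is a minimal nonzero closed right ideal iff `V` is
one-dimensional. -/
theorem stmt9 (H : Type*) [NormedAddCommGroup H] [InnerProductSpace ℂ H] [CompleteSpace H]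
    (L : Submodule ℂ (H →L[ℂ] H))
    (hLcompact : ∀ a ∈ L, IsCompactOperator a)
    (hLclosed : IsClosed (L : Set (H →L[ℂ] H)))
    (hLright : ∀ a ∈ L, ∀ b : H →L[ℂ] H, IsCompactOperator b → a * b ∈ L) :
    -- existence and uniqueness of `V`
    (∃! V : Submodule ℂ H, IsClosed (V : Set H) ∧
      (L : Set (H →L[ℂ] H)) = {a : H →L[ℂ] H | IsCompactOperator a ∧ ∀ x : H, a x ∈ V}) ∧
    -- minimality corresponds to `dim V = 1`
    (∀ V : Submodule ℂ H, IsClosed (V : Set H) →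
      (L : Set (H →L[ℂ] H)) = {a : H →L[ℂ] H | IsCompactOperator a ∧ ∀ x : H, a x ∈ V} →
      ((L ≠ ⊥ ∧ ∀ L' : Submodule ℂ (H →L[ℂ] H),
          (∀ a ∈ L', IsCompactOperator a) → IsClosed (L' : Set (H →L[ℂ] H)) →
          (∀ a ∈ L', ∀ b : H →L[ℂ] H, IsCompactOperator b → a * b ∈ L') →
          L' ≤ L → L' = ⊥ ∨ L' = L) ↔
        Module.finrank ℂ V = 1)) :=
  (stmt9_general L hLcompact hLclosed hLright).imp_right fun h V _ ↦ h V
end
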